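/- arXiv:1810.07927 — 3 statements merged into one kernel-verified Lean document; each statement's English description precedes it below -/
import Mathlib

section
/- Let f : ℝⁿ → ℝⁿ, g : ℝⁿ → ℝ^{n×m}, and for a C² function W : ℝⁿ → ℝ define 𝓛W(x) = (∂W/∂x)(x)·f(x) + (1/2)Tr( g(x)ᵀ (∂²W/∂x²)(x) g(x) ). Let V : ℝⁿ → ℝ be C² with V(0) = 0 and V(x) > 0 for x ≠ 0; let K : ℝ → ℝ be continuously differentiable on (0,∞) with K(s) > 0 and K'(s) ≥ 0 for s > 0 and ∫₀^ε ds/K(s) < ∞ for all ε > 0; let c > 0. Assume that for all x ≠ 0, K(V(x))·[ c·K(V(x)) + 𝓛V(x) ] ≤ ( K'(V(x)) / 2 )·|(∂V/∂x)(x) g(x)|². Then the function F(x) := ∫₀^{V(x)} ds/K(s) satisfies 𝓛F(x) ≤ −c for every x ≠ 0. -/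
/-!
Write `Φ t = ∫₀ᵗ ds / K s`, so that `F = Φ ∘ V`. Since `1 / K` is continuous on `(0, ∞)` and
integrable at `0`, `Φ' = 1 / K` there (`hasDerivAt_integral_Ioo_one_div`). Differentiating `F` twice
away from the origin, where `V > 0`, gives
`DF = (1 / K(V)) DV` and `D²F(v, v) = D²V(v, v) / K(V) - K'(V) (DV v)² / K(V)²`, hence
`𝓛F = 𝓛V / K(V) - K'(V) / (2 K(V)²) · |DV g|²` (`generator_integral_comp`).
Dividing the assumed inequality by `K(V)² > 0` says precisely that the right side is at most `-c`.
-/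

open MeasureTheory
open scoped BigOperators

/-- The `j`-th column of the diffusion matrix `g x`, viewed as a vector in `ℝⁿ`. -/
noncomputable def diffusionCol {n m : ℕ}
    (g : EuclideanSpace ℝ (Fin n) → Matrix (Fin n) (Fin m) ℝ)
    (x : EuclideanSpace ℝ (Fin n)) (j : Fin m) : EuclideanSpace ℝ (Fin n) :=
  (EuclideanSpace.equiv (Fin n) ℝ).symm fun i => g x i j

/-- The infinitesimal generator `𝓛W(x) = (∂W/∂x)(x)·f(x) + (1/2) Tr(g(x)ᵀ (∂²W/∂x²)(x) g(x))`
along the stochastic differential equation `dx = f(x) dt + g(x) dB(t)`, where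
`Tr(gᵀ H g) = ∑_j ⟨g_{⬝j}, H g_{⬝j}⟩` is expressed via the columns of `g`. -/
noncomputable def generator {n m : ℕ}
    (f : EuclideanSpace ℝ (Fin n) → EuclideanSpace ℝ (Fin n))
    (g : EuclideanSpace ℝ (Fin n) → Matrix (Fin n) (Fin m) ℝ)
    (W : EuclideanSpace ℝ (Fin n) → ℝ) (x : EuclideanSpace ℝ (Fin n)) : ℝ :=
  fderiv ℝ W x (f x)
    + (1 / 2) * ∑ j : Fin m, fderiv ℝ (fderiv ℝ W) x (diffusionCol g x j) (diffusionCol g x j)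

lemma hasDerivAt_integral_Ioo_one_div {K : ℝ → ℝ} (hK : ContDiffOn ℝ 1 K (Set.Ioi 0))
    (hKpos : ∀ s : ℝ, 0 < s → 0 < K s)
    (hint : ∀ ε : ℝ, 0 < ε → IntegrableOn (fun s => 1 / K s) (Set.Ioo 0 ε))
    {t : ℝ} (ht : 0 < t) :
    HasDerivAt (fun t => ∫ s in Set.Ioo (0 : ℝ) t, 1 / K s) (1 / K t) t := by
  have hcont : ContinuousOn (fun s => 1 / K s) (Set.Ioi 0) :=
    continuousOn_const.div hK.continuousOn fun s hs => (hKpos s hs).ne'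
  have hmem : Set.Ioi (0 : ℝ) ∈ nhds t := Ioi_mem_nhds ht
  have hii : IntervalIntegrable (fun s => 1 / K s) volume 0 t := by
    rw [intervalIntegrable_iff_integrableOn_Ioo_of_le ht.le]
    exact hint t ht
  have h := intervalIntegral.integral_hasDerivAt_right hii
    (hcont.stronglyMeasurableAtFilter isOpen_Ioi t ht) (hcont.continuousAt hmem)
  refine h.congr_of_eventuallyEq ?_
  filter_upwards [hmem] with u hu
  rw [intervalIntegral.integral_of_le (le_of_lt hu), integral_Ioc_eq_integral_Ioo]

/-- The chain rule for the generator of `F = ∫₀^V ds / K`, at a point where `V` is positive. -/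
lemma generator_integral_comp {n m : ℕ}
    (f : EuclideanSpace ℝ (Fin n) → EuclideanSpace ℝ (Fin n))
    (g : EuclideanSpace ℝ (Fin n) → Matrix (Fin n) (Fin m) ℝ)
    {V : EuclideanSpace ℝ (Fin n) → ℝ} {K : ℝ → ℝ} (hV : ContDiff ℝ 2 V)
    (hK : ContDiffOn ℝ 1 K (Set.Ioi 0)) (hKpos : ∀ s : ℝ, 0 < s → 0 < K s)
    (hint : ∀ ε : ℝ, 0 < ε → IntegrableOn (fun s => 1 / K s) (Set.Ioo 0 ε))
    {x : EuclideanSpace ℝ (Fin n)} (hx : 0 < V x) :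
    generator f g (fun y => ∫ s in Set.Ioo (0 : ℝ) (V y), 1 / K s) x
      = (K (V x))⁻¹ * generator f g V x
        - deriv K (V x) / (2 * K (V x) ^ 2)
          * ∑ j : Fin m, (fderiv ℝ V x (diffusionCol g x j)) ^ 2 := by
  have hVd : Differentiable ℝ V := hV.differentiable (by norm_num)
  have hDV : Differentiable ℝ (fderiv ℝ V) :=
    (hV.fderiv_right (m := 1) (by norm_num)).differentiable (by norm_num)
  have hF : ∀ y, 0 < V y → HasFDerivAt (fun y => ∫ s in Set.Ioo (0 : ℝ) (V y), 1 / K s)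
      ((K (V y))⁻¹ • fderiv ℝ V y) y := fun y hy => by
    rw [← one_div]
    exact (hasDerivAt_integral_Ioo_one_div hK hKpos hint hy).comp_hasFDerivAt y (hVd y).hasFDerivAt
  -- The formula for `DF` holds on the open set `{V > 0}`, so it may be differentiated at `x`.
  have hev : fderiv ℝ (fun y => ∫ s in Set.Ioo (0 : ℝ) (V y), 1 / K s)
      =ᶠ[nhds x] fun y => (K (V y))⁻¹ • fderiv ℝ V y := by
    filter_upwards [hV.continuous.continuousAt.eventually (Ioi_mem_nhds hx)] with y hy
    exact (hF y hy).fderiv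
  have hKd : HasDerivAt K (deriv K (V x)) (V x) :=
    ((hK.differentiableOn (by norm_num)).differentiableAt (Ioi_mem_nhds hx)).hasDerivAt
  have hKx : K (V x) ≠ 0 := (hKpos _ hx).ne'
  have hD2 := ((hKd.fun_inv hKx).comp_hasFDerivAt x (hVd x).hasFDerivAt).fun_smul
    (hDV x).hasFDerivAt
  have hD2F := hev.fderiv_eq.trans hD2.fderiv
  have hquad : ∀ v, fderiv ℝ (fderiv ℝ (fun y => ∫ s in Set.Ioo (0 : ℝ) (V y), 1 / K s)) x v v
      = (K (V x))⁻¹ * fderiv ℝ (fderiv ℝ V) x v v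
        - deriv K (V x) / K (V x) ^ 2 * (fderiv ℝ V x v) ^ 2 := fun v => by
    rw [hD2F]
    simp
    ring
  unfold generator
  rw [(hF x hx).fderiv]
  simp only [hquad, Finset.sum_sub_distrib, ← Finset.mul_sum, smul_apply, smul_eq_mul]
  field_simp
  ring

/-- Let `V` be `C²` and positive definite, `K` continuously differentiable
on `(0, ∞)` with `K > 0`, `K' ≥ 0` there and `∫₀^ε ds / K s < ∞` for all `ε > 0`, and let
`c > 0`.  If `K(V(x))·[c K(V(x)) + 𝓛V(x)] ≤ (K'(V(x))/2)·|(∂V/∂x)(x) g(x)|²` for all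
`x ≠ 0`, then `F x := ∫₀^{V x} ds / K s` satisfies `𝓛F(x) ≤ −c` for every `x ≠ 0`. -/
theorem generator_of_integral_comp_lyapunov_le_neg
    {n m : ℕ} (f : EuclideanSpace ℝ (Fin n) → EuclideanSpace ℝ (Fin n))
    (g : EuclideanSpace ℝ (Fin n) → Matrix (Fin n) (Fin m) ℝ)
    (V : EuclideanSpace ℝ (Fin n) → ℝ) (K : ℝ → ℝ) (c : ℝ)
    (hV : ContDiff ℝ 2 V) (hV0 : V 0 = 0) (hVpos : ∀ x, x ≠ 0 → 0 < V x)
    (hK : ContDiffOn ℝ 1 K (Set.Ioi 0))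
    (hKpos : ∀ s : ℝ, 0 < s → 0 < K s)
    (hK' : ∀ s : ℝ, 0 < s → 0 ≤ deriv K s)
    (hint : ∀ ε : ℝ, 0 < ε → IntegrableOn (fun s => 1 / K s) (Set.Ioo 0 ε))
    (hc : 0 < c)
    (hineq : ∀ x, x ≠ 0 →
      K (V x) * (c * K (V x) + generator f g V x)
        ≤ (deriv K (V x) / 2) * ∑ j : Fin m, (fderiv ℝ V x (diffusionCol g x j)) ^ 2) :
    ∀ x, x ≠ 0 →
      generator f g (fun y => ∫ s in Set.Ioo (0 : ℝ) (V y), 1 / K s) x ≤ -c := by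
  intro x hx
  have hVx := hVpos x hx
  have hk := hKpos _ hVx
  rw [generator_integral_comp f g hV hK hKpos hint hVx]
  have h := hineq x hx
  generalize (∑ j : Fin m, (fderiv ℝ V x (diffusionCol g x j)) ^ 2) = S at *
  generalize generator f g V x = L at *
  generalize deriv K (V x) = k' at *
  generalize K (V x) = k at *
  have e : k⁻¹ * L - k' / (2 * k ^ 2) * S = (k * (c * k + L) - k' / 2 * S) / k ^ 2 - c := by
    field_simp
    ring
  have := div_nonpos_of_nonpos_of_nonneg (sub_nonpos.mpr h) (sq_nonneg k)
  rw [e]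
  linarith
end

section
/- Let α ≥ 2, c₁ > 0, c₃ ≠ 0, c₂ = (1/2)(α−1)c₃², β₁ ∈ (0,1) and β₂ = (β₁+1)/2. Define f(x) = −c₁·x − c₂·x^{⟨β₁⟩} and g(x) = c₃·x^{⟨β₂⟩}, and V(x) = |x|^α. Then for every x ≠ 0, 𝓛V(x) = V'(x)f(x) + (1/2)g(x)²V''(x) = −c₁·α·V(x). -/
/-!
Away from the origin `|·| ^ r` has derivative `r |x| ^ (r - 1) sign x`, and `sign` is locally
constant there, so `V' = α |x| ^ (α - 1) sign x` and `V'' = α (α - 1) |x| ^ (α - 2)`. Since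
`x = sign x · |x|` and `sign x ^ 2 = 1`, the linear part of `f` contributes `-c₁ α |x| ^ α`, while
the other part of `f` and the Itô term are both multiples of `|x| ^ (α - 1 + β₁)`
(as `2 β₂ = β₁ + 1`). The choice of `c₂` is exactly the one for which these two cancel.
-/

theorem hasDerivAt_abs_rpow_of_ne_zero (r : ℝ) {x : ℝ} (hx : x ≠ 0) :
    HasDerivAt (fun y : ℝ => |y| ^ r) (r * |x| ^ (r - 1) * Real.sign x) x := by
  have habs : HasDerivAt (fun y : ℝ => |y|) (Real.sign x) x := by
    rcases lt_or_gt_of_ne hx with h | h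
    · rw [Real.sign_of_neg h]
      exact hasDerivAt_abs_neg h
    · rw [Real.sign_of_pos h]
      exact hasDerivAt_abs_pos h
  convert habs.rpow_const (p := r) (Or.inl (abs_ne_zero.mpr hx)) using 1
  ring

theorem eventually_sign_eq {x : ℝ} (hx : x ≠ 0) :
    ∀ᶠ y in nhds x, Real.sign y = Real.sign x := by
  rcases lt_or_gt_of_ne hx with h | h
  · filter_upwards [eventually_lt_nhds h] with y hy
    rw [Real.sign_of_neg hy, Real.sign_of_neg h]
  · filter_upwards [eventually_gt_nhds h] with y hy
    rw [Real.sign_of_pos hy, Real.sign_of_pos h]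


/-- Example 1, Case 2.  Let `α ≥ 2`, `c₁ > 0`, `c₃ ≠ 0`,
`c₂ = (1/2)(α−1)c₃²`, `β₁ ∈ (0,1)` and `β₂ = (β₁+1)/2`.  With
`f x = −c₁ x − c₂ x^{⟨β₁⟩}`, `g x = c₃ x^{⟨β₂⟩}` (signed powers
`x^{⟨r⟩} = sign x · |x|^r`) and `V x = |x|^α`, for every `x ≠ 0`:
`𝓛V(x) = V'(x) f(x) + (1/2) g(x)² V''(x) = −c₁ α V(x)`. -/
theorem generator_abs_rpow_eq_neg_linear
    (α c₁ c₂ c₃ β₁ β₂ : ℝ) (hα : 2 ≤ α) (hc₁ : 0 < c₁) (hc₃ : c₃ ≠ 0)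
    (hc₂ : c₂ = (1 / 2) * (α - 1) * c₃ ^ 2)
    (hβ₁ : 0 < β₁ ∧ β₁ < 1) (hβ₂ : β₂ = (β₁ + 1) / 2)
    (f g V : ℝ → ℝ)
    (hf : ∀ x : ℝ, f x = -c₁ * x - c₂ * (Real.sign x * |x| ^ β₁))
    (hg : ∀ x : ℝ, g x = c₃ * (Real.sign x * |x| ^ β₂))
    (hV : ∀ x : ℝ, V x = |x| ^ α) :
    ∀ x : ℝ, x ≠ 0 →
      deriv V x * f x + (1 / 2) * (g x) ^ 2 * deriv (deriv V) x = -c₁ * α * V x := by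
  intro x hx
  have hVfun : V = fun y => |y| ^ α := funext hV
  have hderiv : ∀ y : ℝ, y ≠ 0 → deriv V y = α * |y| ^ (α - 1) * Real.sign y := by
    intro y hy
    rw [hVfun]
    exact (hasDerivAt_abs_rpow_of_ne_zero α hy).deriv
  have hev : deriv V =ᶠ[nhds x] fun y => α * |y| ^ (α - 1) * Real.sign x := by
    filter_upwards [eventually_sign_eq hx, eventually_ne_nhds hx] with y hs hy
    rw [hderiv y hy, hs]
  have hderiv2 : deriv (deriv V) x
      = α * ((α - 1) * |x| ^ (α - 1 - 1) * Real.sign x) * Real.sign x := by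
    rw [hev.deriv_eq]
    exact (((hasDerivAt_abs_rpow_of_ne_zero (α - 1) hx).const_mul α).mul_const _).deriv
  have hpos : 0 < |x| := abs_pos.mpr hx
  have hs : Real.sign x ^ 2 = 1 := by
    rcases Real.sign_apply_eq_of_ne_zero x hx with h | h <;> rw [h] <;> norm_num
  have hxs : x = Real.sign x * |x| := by
    rcases lt_or_gt_of_ne hx with h | h
    · rw [Real.sign_of_neg h, abs_of_neg h]; ring
    · rw [Real.sign_of_pos h, abs_of_pos h]; ring
  have hlin : |x| ^ (α - 1) * |x| = |x| ^ α := by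
    rw [← Real.rpow_add_one hpos.ne']; congr 1; ring
  have hpow : (|x| ^ β₂) ^ 2 * |x| ^ (α - 1 - 1) = |x| ^ (α - 1) * |x| ^ β₁ := by
    rw [sq, ← Real.rpow_add hpos, ← Real.rpow_add hpos, ← Real.rpow_add hpos]
    congr 1
    rw [hβ₂]; ring
  have hfx : f x = Real.sign x * (-c₁ * |x| - c₂ * |x| ^ β₁) := by
    rw [hf x]
    linear_combination -c₁ * hxs
  rw [hderiv x hx, hderiv2, hfx, hg x, hV x, hc₂]
  generalize Real.sign x = s at hs
  calc _ = s ^ 2 * (-c₁ * α * (|x| ^ (α - 1) * |x|)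
            - 1 / 2 * (α - 1) * c₃ ^ 2 * α * (|x| ^ (α - 1) * |x| ^ β₁))
          + (s ^ 2) ^ 2 * (1 / 2 * c₃ ^ 2 * α * (α - 1)
            * ((|x| ^ β₂) ^ 2 * |x| ^ (α - 1 - 1))) := by ring
    _ = -c₁ * α * |x| ^ α := by rw [hs, hlin, hpow]; ring
end

section
/- Let p < q be positive odd integers, c₀ ≠ 0 a real number, and α > 2. Define f(x) = −(1/2)c₀²·x^{⟨p/q⟩}, g(x) = c₀·x^{⟨(p+q)/(2q)⟩}, and V(x) = |x|^α, and set γ = 1 − (q−p)/(αq). Then 0 < γ < 1, and for every c with 0 < c ≤ ((p+q)/(2q))·c₀²·α and every x ≠ 0, V(x)·( c·V(x)^γ + 𝓛V(x) ) ≤ (γ/2)·( V'(x)·g(x) )², where 𝓛V(x) = V'(x)f(x) + (1/2)g(x)²V''(x). -/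
/-!
On `x ≠ 0`, with `r = |x|` and `s = p/q`, every term is a constant times a power of `r`:
`V' = α r^(α-2) x`, `V'' = α (α-1) r^(α-2)`, `V^γ = r^(α-1+s)` because `α γ = α-1+s`, and
`𝓛V = (1/2) c₀² α (α-2) r^(α-1+s)`. The claim thus reduces to
`c + (1/2) c₀² α (α-2) ≤ (1/2) c₀² α (α-1+s)`, that is `c ≤ ((1+s)/2) c₀² α`, so the bound
assumed on `c` is exactly the sharp one.
-/

/-- Valid for all `x`, including `0`, as `α > 1`. -/
lemma deriv_abs_rpow_eq {α : ℝ} (hα : 2 < α) :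
    deriv (fun x : ℝ => |x| ^ α) = fun x => α * |x| ^ (α - 2) * x := by
  funext x
  exact (hasDerivAt_abs_rpow x (by linarith)).deriv

lemma deriv_deriv_abs_rpow_eq {α : ℝ} (hα : 2 < α) {x : ℝ} (hx : x ≠ 0) :
    deriv (deriv (fun x : ℝ => |x| ^ α)) x = α * (α - 1) * |x| ^ (α - 2) := by
  rw [deriv_abs_rpow_eq hα]
  have hr : 0 < |x| := abs_pos.mpr hx
  have h1 := (((hasDerivAt_abs hx).rpow_const (p := α - 2) (Or.inl hr.ne')).const_mul α).mul
    (hasDerivAt_id x)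
  refine (HasDerivAt.deriv h1).trans ?_
  have h2 : |x| ^ (α - 2) = |x| ^ (α - 2 - 1) * |x| := by
    rw [← Real.rpow_add_one hr.ne']; congr 1; ring
  have h3 : ((SignType.sign x : SignType) : ℝ) * x = |x| := sign_mul_self x
  simp only [id]
  linear_combination α * (α - 2) * |x| ^ (α - 2 - 1) * h3 - α * (α - 2) * h2


/-- Example 3, verification of condition (30).  Let `p < q` be positive
odd integers, `c₀ ≠ 0`, `α > 2`.  With `f x = −(1/2)c₀² x^{⟨p/q⟩}`,
`g x = c₀ x^{⟨(p+q)/(2q)⟩}` (signed powers `x^{⟨r⟩} = sign x · |x|^r`), `V x = |x|^α` and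
`γ = 1 − (q−p)/(αq)`, one has `0 < γ < 1` and, for every `c` with
`0 < c ≤ ((p+q)/(2q)) c₀² α` and every `x ≠ 0`,
`V(x)·(c V(x)^γ + 𝓛V(x)) ≤ (γ/2)·(V'(x) g(x))²` where
`𝓛V(x) = V'(x) f(x) + (1/2) g(x)² V''(x)`. -/
theorem finite_time_condition_example_three
    (p q : ℕ) (c₀ α γ : ℝ) (hp : Odd p) (hq : Odd q) (hp0 : 0 < p) (hpq : p < q)
    (hc₀ : c₀ ≠ 0) (hα : 2 < α)
    (hγ : γ = 1 - ((q : ℝ) - (p : ℝ)) / (α * q))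
    (f g V : ℝ → ℝ)
    (hf : ∀ x : ℝ, f x = -(1 / 2) * c₀ ^ 2 * (Real.sign x * |x| ^ ((p : ℝ) / q)))
    (hg : ∀ x : ℝ, g x = c₀ * (Real.sign x * |x| ^ (((p : ℝ) + q) / (2 * q))))
    (hV : ∀ x : ℝ, V x = |x| ^ α) :
    (0 < γ ∧ γ < 1) ∧
      ∀ c : ℝ, 0 < c → c ≤ (((p : ℝ) + q) / (2 * q)) * c₀ ^ 2 * α →
        ∀ x : ℝ, x ≠ 0 →
          V x * (c * V x ^ γ +
              (deriv V x * f x + (1 / 2) * (g x) ^ 2 * deriv (deriv V) x))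
            ≤ (γ / 2) * (deriv V x * g x) ^ 2 := by
  have hpR : (0 : ℝ) < p := by exact_mod_cast hp0
  have hpqR : (p : ℝ) < q := by exact_mod_cast hpq
  have hqR : (0 : ℝ) < q := hpR.trans hpqR
  have hα0 : 0 < α := by linarith
  have hαγ : α * γ = α - 1 + p / q := by
    rw [hγ]; field_simp; ring
  have hs0 : (0 : ℝ) < p / q := by positivity
  have hs1 : (p : ℝ) / q < 1 := (div_lt_one hqR).mpr hpqR
  refine ⟨⟨by nlinarith, by nlinarith⟩, ?_⟩
  intro c _ hc x hx
  have hr : 0 < |x| := abs_pos.mpr hx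
  obtain rfl : V = fun x => |x| ^ α := funext hV
  have hxs : x * Real.sign x = |x| := by
    rcases lt_or_gt_of_ne hx with h | h
    · rw [Real.sign_of_neg h, abs_of_neg h]; ring
    · rw [Real.sign_of_pos h, abs_of_pos h]; ring
  have hs2 : Real.sign x ^ 2 = 1 := by
    rcases lt_or_gt_of_ne hx with h | h
    · rw [Real.sign_of_neg h]; norm_num
    · rw [Real.sign_of_pos h]; norm_num
  rw [deriv_deriv_abs_rpow_eq hα hx, deriv_abs_rpow_eq hα, hf, hg]
  have hV1 : (|x| ^ α) ^ γ = |x| ^ (α - 2) * |x| * |x| ^ ((p : ℝ) / q) := by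
    rw [← Real.rpow_mul hr.le, hαγ, ← Real.rpow_add_one hr.ne', ← Real.rpow_add hr]
    congr 1; ring
  have hV0 : |x| ^ α = |x| ^ (α - 2) * |x| ^ 2 := by
    rw [← Real.rpow_natCast, ← Real.rpow_add hr]
    congr 1; push_cast; ring
  have hg2 : (|x| ^ (((p : ℝ) + q) / (2 * q))) ^ 2 = |x| ^ ((p : ℝ) / q) * |x| := by
    rw [← Real.rpow_natCast, ← Real.rpow_mul hr.le, ← Real.rpow_add_one hr.ne']
    congr 1; push_cast; field_simp
  have hcs : ((p : ℝ) + q) / (2 * q) = (1 + p / q) / 2 := by field_simp; ring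
  rw [hcs] at hc
  beta_reduce
  rw [hV1, hV0]
  have hA : 0 < |x| ^ (α - 2) := Real.rpow_pos_of_pos hr _
  have hB : 0 < |x| ^ ((p : ℝ) / q) := Real.rpow_pos_of_pos hr _
  generalize |x| ^ (α - 2) = A at *
  generalize |x| ^ ((p : ℝ) / q) = B at *
  generalize |x| ^ (((p : ℝ) + q) / (2 * q)) = G at *
  generalize (p : ℝ) / q = s at *
  generalize |x| = r at *
  have hR : γ / 2 * (α * A * x * (c₀ * (Real.sign x * G))) ^ 2
      = A ^ 2 * r ^ 3 * B * (c₀ ^ 2 * α * (α - 1 + s) / 2) := by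
    calc _ = (α * γ) / 2 * α * A ^ 2 * c₀ ^ 2 * (x * Real.sign x) ^ 2 * G ^ 2 := by ring
      _ = _ := by rw [hαγ, hxs, hg2]; ring
  have hL : A * r ^ 2 * (c * (A * r * B) + (α * A * x * (-(1 / 2) * c₀ ^ 2 * (Real.sign x * B))
      + 1 / 2 * (c₀ * (Real.sign x * G)) ^ 2 * (α * (α - 1) * A)))
      = A ^ 2 * r ^ 3 * B * (c + c₀ ^ 2 * α * (α - 2) / 2) := by
    calc _ = A * r ^ 2 * (c * (A * r * B) + (-(1 / 2) * α * A * c₀ ^ 2 * (x * Real.sign x) * B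
          + 1 / 2 * c₀ ^ 2 * Real.sign x ^ 2 * G ^ 2 * (α * (α - 1) * A))) := by ring
      _ = _ := by rw [hxs, hs2, hg2]; ring
  rw [hR, hL]
  exact mul_le_mul_of_nonneg_left (by linarith) (by positivity)
end
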